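/- arXiv:2502.20565 — 3 statements merged into one kernel-verified Lean document; each statement's English description precedes it below -/
import Mathlib

section
/- Let f : ℝ^d → ℝ and λ > 0, and let u be uniformly distributed on the sphere of radius √d in ℝ^d. Define the two-point zeroth-order gradient estimator g(x) = ((f(x + λu) − f(x − λu))/(2λ))·u and the smoothed function f_λ(x) = E_v[f(x + λv)] where v is uniform on the Euclidean ball of radius √d. Then f_λ is differentiable and E_u[g(x)] = ∇f_λ(x). -/
open MeasureTheory
open scoped RealInnerProductSpace

/-- The uniform probability measure on the Euclidean ball of radius `√d` in `ℝ^d`. -/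
noncomputable def ballUniform (d : ℕ) : Measure (EuclideanSpace ℝ (Fin d)) :=
  (volume (Metric.closedBall (0 : EuclideanSpace ℝ (Fin d)) (Real.sqrt d)))⁻¹ •
    volume.restrict (Metric.closedBall (0 : EuclideanSpace ℝ (Fin d)) (Real.sqrt d))


lemma zo_polar {E : Type*} [NormedAddCommGroup E] [InnerProductSpace ℝ E] [FiniteDimensional ℝ E]
    [MeasurableSpace E] [BorelSpace E] [Nontrivial E] (G : E → ℝ)
    (hG : Integrable G) :
    ∫ y, G y = ∫ r in Set.Ioi (0:ℝ), r ^ (Module.finrank ℝ E - 1) *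
      ∫ u : Metric.sphere (0:E) 1, G (r • (u:E)) ∂((volume : Measure E).toSphere) := by
  set μ : Measure E := volume with hμ
  have hmp := μ.measurePreserving_homeomorphUnitSphereProd
  have hemb := (homeomorphUnitSphereProd E).measurableEmbedding
  let K : Metric.sphere (0:E) 1 × Set.Ioi (0:ℝ) → ℝ := fun p => G ((p.2:ℝ) • (p.1 : E))
  have hK : ∀ y : ({(0)}ᶜ : Set E), K (homeomorphUnitSphereProd E y) = G y := by
    intro y
    have : ‖(y:E)‖ ≠ 0 := norm_ne_zero_iff.2 y.2
    simp [K, smul_smul, this]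
  have hKint : Integrable K (μ.toSphere.prod (.volumeIoiPow (Module.finrank ℝ E - 1))) := by
    rw [← hmp.integrable_comp_emb hemb]
    have : K ∘ (homeomorphUnitSphereProd E) = G ∘ (Subtype.val) := funext hK
    rw [this, ← integrableOn_iff_comap_subtypeVal (measurableSet_singleton _).compl]
    exact hG.integrableOn
  calc ∫ y, G y ∂μ = ∫ y : ({(0)}ᶜ : Set E), G y.1 ∂(μ.comap (↑)) := by
        rw [integral_subtype_comap (measurableSet_singleton _).compl G,
          restrict_compl_singleton]
    _ = ∫ p, K p ∂μ.toSphere.prod (.volumeIoiPow (Module.finrank ℝ E - 1)) := by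
        rw [← hmp.integral_comp hemb K]
        exact integral_congr_ae (.of_forall fun y => (hK y).symm)
    _ = ∫ r, (∫ u, K (u, r) ∂μ.toSphere) ∂(.volumeIoiPow (Module.finrank ℝ E - 1)) :=
        integral_prod_symm K hKint
    _ = _ := by
      simp only [Measure.volumeIoiPow, ENNReal.ofReal]
      rw [integral_withDensity_eq_integral_smul,
        integral_subtype_comap measurableSet_Ioi fun a ↦ Real.toNNReal (a ^ (Module.finrank ℝ E - 1)) •
          ∫ u : Metric.sphere (0:E) 1, G (a • (u:E)) ∂μ.toSphere,
        setIntegral_congr_fun measurableSet_Ioi fun x hx ↦ ?_]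
      · rw [NNReal.smul_def, Real.coe_toNNReal _ (pow_nonneg (le_of_lt hx) _), smul_eq_mul]
      · exact (measurable_subtype_coe.pow_const _).real_toNNReal

lemma zo_charFun_radial {E : Type*} [NormedAddCommGroup E] [InnerProductSpace ℝ E]
    [FiniteDimensional ℝ E] [MeasurableSpace E] [BorelSpace E] (μ : Measure E)
    (hinv : ∀ T : E ≃ₗᵢ[ℝ] E, Measure.map T μ = μ) (s t : E) (h : ‖s‖ = ‖t‖) :
    charFun μ s = charFun μ t := by
  have h1 := Submodule.reflection_sub h
  set T : E ≃ₗᵢ[ℝ] E := (ℝ ∙ (s - t))ᗮ.reflection with hT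
  rw [charFun_apply, charFun_apply]
  conv_rhs => rw [← hinv T]
  rw [integral_map (T.continuous.measurable.aemeasurable) (by fun_prop)]
  simp_rw [← h1, LinearIsometryEquiv.inner_map_map]

lemma zo_unique {E : Type*} [NormedAddCommGroup E] [InnerProductSpace ℝ E]
    [FiniteDimensional ℝ E] [MeasurableSpace E] [BorelSpace E] (μ ν : Measure E)
    [IsProbabilityMeasure μ] [IsFiniteMeasure ν] (R : ℝ) (hR : 0 < R)
    (hμ : ∀ᵐ u ∂μ, ‖u‖ = R) (hν : ∀ᵐ u ∂ν, ‖u‖ = R)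
    (hμi : ∀ T : E ≃ₗᵢ[ℝ] E, Measure.map T μ = μ)
    (hνi : ∀ T : E ≃ₗᵢ[ℝ] E, Measure.map T ν = ν) :
    ν = ν Set.univ • μ := by
  have : IsFiniteMeasure (ν Set.univ • μ) := μ.smul_finite (measure_ne_top ν _)
  apply Measure.ext_of_charFun
  ext t
  have e1 : charFun (ν Set.univ • μ) t = ν.real Set.univ • charFun μ t := by
    rw [charFun_apply, integral_smul_measure, charFun_apply]; rfl
  rw [e1]
  set s := ‖t‖ / R
  have hs : 0 ≤ s := by positivity
  have hsR : s * R = ‖t‖ := by simp only [s]; field_simp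
  -- double integral
  have key : ∫ u, ∫ v, Complex.exp (⟪v, s • u⟫ * Complex.I) ∂ν ∂μ
      = ∫ v, ∫ u, Complex.exp (⟪v, s • u⟫ * Complex.I) ∂μ ∂ν := by
    apply integral_integral_swap
    refine Integrable.of_bound (C := 1) ?_ ?_
    · apply Continuous.aestronglyMeasurable
      fun_prop
    · refine .of_forall fun p => ?_
      simp only [Function.uncurry]
      rw [Complex.norm_exp_ofReal_mul_I]
  have l1 : ∫ u, ∫ v, Complex.exp (⟪v, s • u⟫ * Complex.I) ∂ν ∂μ = charFun ν t := by
    rw [integral_congr_ae (g := fun _ => charFun ν t)]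
    · simp
    · filter_upwards [hμ] with u hu
      change charFun ν (s • u) = _
      apply zo_charFun_radial ν hνi
      rw [norm_smul, hu, Real.norm_of_nonneg hs, hsR]
  have l2 : ∫ v, ∫ u, Complex.exp (⟪v, s • u⟫ * Complex.I) ∂μ ∂ν =
      ν.real Set.univ • charFun μ t := by
    rw [integral_congr_ae (g := fun _ => charFun μ t)]
    · simp
    · filter_upwards [hν] with v hv
      have : ∀ u, ⟪v, s • u⟫ = ⟪u, s • v⟫ := fun u => by
        rw [inner_smul_right, inner_smul_right, real_inner_comm]
      simp_rw [this]
      change charFun μ (s • v) = _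
      apply zo_charFun_radial μ hμi
      rw [norm_smul, hv, Real.norm_of_nonneg hs, hsR]
  rw [← l1, key, l2]

open scoped Pointwise in
lemma zo_toSphere_inv {E : Type*} [NormedAddCommGroup E] [InnerProductSpace ℝ E]
    [FiniteDimensional ℝ E] [MeasurableSpace E] [BorelSpace E] (R : ℝ) (T : E ≃ₗᵢ[ℝ] E) :
    Measure.map T (Measure.map (fun u : Metric.sphere (0:E) 1 => R • (u:E))
      ((volume : Measure E).toSphere)) = Measure.map (fun u : Metric.sphere (0:E) 1 => R • (u:E))
      ((volume : Measure E).toSphere) := by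
  have hm : Measurable (fun u : Metric.sphere (0:E) 1 => R • (u:E)) := by fun_prop
  have hT : Measurable T := T.continuous.measurable
  ext s hs
  rw [Measure.map_apply hT hs, Measure.map_apply hm (hT hs), Measure.map_apply hm hs,
    Measure.toSphere_apply' _ (hm (hT hs)), Measure.toSphere_apply' _ (hm hs)]
  congr 1
  rw [← (T.measurePreserving).measure_preimage_emb T.toHomeomorph.measurableEmbedding
    (Set.Ioo (0:ℝ) 1 • (Subtype.val '' ((fun u : Metric.sphere (0:E) 1 => R • (u:E)) ⁻¹' s)))]
  congr 1
  ext y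
  simp only [Set.mem_smul, Set.mem_preimage, Set.mem_image, Subtype.exists]
  constructor
  · rintro ⟨r, hr, z, ⟨w, hw, hw2, rfl⟩, rfl⟩
    refine ⟨r, hr, T w, ⟨T w, by simpa using hw, by simpa using hw2, rfl⟩, by simp⟩
  · rintro ⟨r, hr, z, ⟨w, hw, hw2, rfl⟩, h⟩
    refine ⟨r, hr, T.symm w, ⟨T.symm w, by simpa using hw, by simpa using hw2, rfl⟩, ?_⟩
    apply T.injective
    simp [h]

lemma zo_calc (a b : ℝ → ℝ) (ha : Continuous a) (hb : Continuous b)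
    (H : ∀ R : ℝ, 0 < R → ∫ r in (0:ℝ)..R, (R^2 - r^2)^2 * a r
      = 4 * ∫ r in (0:ℝ)..R, (R^2-r^2) * b r) (R : ℝ) (hR : 0 < R) :
    R * ∫ r in (0:ℝ)..R, a r = b R := by
  have FT : ∀ (c : ℝ → ℝ) (_ : Continuous c) (R : ℝ),
      HasDerivAt (fun R => ∫ r in (0:ℝ)..R, c r) (c R) R := fun c hc R =>
    intervalIntegral.integral_hasDerivAt_right (hc.intervalIntegrable _ _)
      (hc.stronglyMeasurableAtFilter _ _) hc.continuousAt
  have c2a : Continuous (fun r => r^2 * a r) := by fun_prop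
  have c4a : Continuous (fun r => r^4 * a r) := by fun_prop
  have c2b : Continuous (fun r => r^2 * b r) := by fun_prop
  have X1 : ∀ R : ℝ, ∫ r in (0:ℝ)..R, (R^2 - r^2)^2 * a r =
      R^4 * (∫ r in (0:ℝ)..R, a r) - 2 * R^2 * (∫ r in (0:ℝ)..R, r^2 * a r)
        + ∫ r in (0:ℝ)..R, r^4 * a r := by
    intro R
    rw [← intervalIntegral.integral_const_mul, ← intervalIntegral.integral_const_mul,
      ← intervalIntegral.integral_sub, ← intervalIntegral.integral_add]
    · congr 1; ext r; ring
    all_goals exact Continuous.intervalIntegrable (by fun_prop) _ _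
  have X2 : ∀ R : ℝ, ∫ r in (0:ℝ)..R, (R^2 - r^2) * b r =
      R^2 * (∫ r in (0:ℝ)..R, b r) - (∫ r in (0:ℝ)..R, r^2 * b r) := by
    intro R
    rw [← intervalIntegral.integral_const_mul, 
      ← intervalIntegral.integral_sub]
    · congr 1; ext r; ring
    all_goals exact Continuous.intervalIntegrable (by fun_prop) _ _
  simp_rw [X1, X2] at H
  have D : ∀ (F G : ℝ → ℝ), (∀ R : ℝ, 0 < R → F R = G R) → ∀ R : ℝ, 0 < R → ∀ x y,
      HasDerivAt F x R → HasDerivAt G y R → x = y := by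
    intro F G h R hR x y hF hG
    refine hF.unique (hG.congr_of_eventuallyEq ?_)
    filter_upwards [lt_mem_nhds hR] with r hr using h r hr
  have S1 : ∀ R : ℝ, 0 < R → R^2 * (∫ r in (0:ℝ)..R, a r) - (∫ r in (0:ℝ)..R, r^2 * a r)
      = 2 * ∫ r in (0:ℝ)..R, b r := by
    intro R hR
    have := D _ _ H R hR _ _
      ((((hasDerivAt_pow 4 R).mul (FT a ha R)).sub
        (((hasDerivAt_pow 2 R).const_mul 2).mul (FT _ c2a R))).add (FT _ c4a R))
      ((((hasDerivAt_pow 2 R).mul (FT b hb R)).sub (FT _ c2b R)).const_mul 4)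
    have h4 : 4 * R ≠ 0 := by positivity
    apply mul_left_cancel₀ h4
    norm_num at this
    linear_combination this
  have := D _ _ S1 R hR _ _ (((hasDerivAt_pow 2 R).mul (FT a ha R)).sub (FT _ c2a R))
    ((FT b hb R).const_mul 2)
  norm_num at this
  linear_combination this / 2

lemma zo_maxsq (s : ℝ) : HasDerivAt (fun s : ℝ => (max s 0)^2) (2 * max s 0) s := by
  rcases lt_trichotomy s 0 with h | h | h
  · rw [max_eq_right h.le]
    refine (hasDerivAt_const s (0:ℝ)).congr_of_eventuallyEq ?_ |>.congr_deriv (by simp)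
    filter_upwards [gt_mem_nhds h] with r hr
    simp [max_eq_right hr.le]
  · subst h
    have : HasFDerivAt (fun s : ℝ => (max s 0)^2) (0 : ℝ →L[ℝ] ℝ) 0 := by
      refine Asymptotics.IsBigO.hasFDerivAt (n := 2) ?_ (by norm_num)
      refine Asymptotics.IsBigO.of_bound 1 (.of_forall fun x => ?_)
      rw [one_mul, sub_zero, norm_pow, norm_pow, norm_norm]
      gcongr
      rw [Real.norm_eq_abs, Real.norm_eq_abs, abs_of_nonneg (le_max_right _ _)]
      exact max_le (le_abs_self x) (abs_nonneg x)
    simpa using this.hasDerivAt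
  · rw [max_eq_left h.le]
    refine (hasDerivAt_pow 2 s).congr_of_eventuallyEq ?_ |>.congr_deriv (by simp)
    filter_upwards [lt_mem_nhds h] with r hr
    simp [max_eq_left hr.le]

lemma zo_ibp {E : Type*} [NormedAddCommGroup E] [InnerProductSpace ℝ E] [FiniteDimensional ℝ E]
    [MeasurableSpace E] [BorelSpace E] (h : E → ℝ) (h' : E → E →L[ℝ] ℝ)
    (hh : ∀ y, HasFDerivAt h (h' y) y) (hc : Continuous h') (e : E) (R : ℝ) :
    ∫ y, (max (R^2 - ‖y‖^2) 0)^2 * h' y e = 4 * ∫ y, (max (R^2 - ‖y‖^2) 0) * (h y * ⟪y, e⟫) := by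
  have hcont : Continuous h := continuous_iff_continuousAt.2 fun y => (hh y).continuousAt
  have hg : ∀ y : E, HasFDerivAt (fun y : E => (max (R^2 - ‖y‖^2) 0)^2)
      ((2 * max (R^2 - ‖y‖^2) 0) • (-((2:ℝ) • innerSL ℝ y))) y := by
    intro y
    have h1 : HasFDerivAt (fun y : E => R^2 - ‖y‖^2) (-((2:ℝ) • innerSL ℝ y)) y :=
      by
      have := (hasStrictFDerivAt_norm_sq y).hasFDerivAt.const_sub (R^2)
      exact this.congr_fderiv (by ext z; simp)
    exact (zo_maxsq (R^2 - ‖y‖^2)).comp_hasFDerivAt y h1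
  have hz : ∀ y : E, y ∉ Metric.closedBall (0:E) |R| → max (R^2 - ‖y‖^2) 0 = 0 := by
    intro y hy
    apply max_eq_right
    have : |R| < ‖y‖ := by simpa using hy
    have := pow_le_pow_left₀ (abs_nonneg R) this.le 2
    rw [sq_abs] at this
    linarith
  have hint : ∀ F : E → ℝ, Continuous F → (∀ y, max (R^2 - ‖y‖^2) 0 = 0 → F y = 0) →
      Integrable F := by
    intro F hF h0
    exact hF.integrable_of_hasCompactSupport
      (HasCompactSupport.intro (isCompact_closedBall _ _) fun y hy => h0 y (hz y hy))
  have cd : Continuous fun y => h' y e := hc.clm_apply continuous_const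
  have key := integral_bilinear_hasFDerivAt_right_eq_neg_left_of_integrable
    (μ := (volume : Measure E)) (v := e)
    (f := h) (f' := h') (g := fun y : E => (max (R^2 - ‖y‖^2) 0)^2)
    (g' := fun y => (2 * max (R^2 - ‖y‖^2) 0) • (-((2:ℝ) • innerSL ℝ y)))
    (B := ContinuousLinearMap.mul ℝ ℝ)
    (hint _ (by simp only [ContinuousLinearMap.mul_apply']; fun_prop) 
      (fun y hy => by simp [hy])) 
    (hint _ (by simp; fun_prop) (fun y hy => by simp [hy])) 
    (hint _ (by simp only [ContinuousLinearMap.mul_apply']; fun_prop) (fun y hy => by simp [hy])) 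
    (fun y _ => hh y) (fun y _ => hg y)
  simp only [ContinuousLinearMap.mul_apply'] at key
  rw [← integral_const_mul]
  simp_rw [mul_comm _ (h' _ e)]
  rw [← neg_neg (∫ y, h' y e * _), ← key, ← integral_neg]
  congr 1; ext y
  simp
  ring

lemma zo_radial {E : Type*} [NormedAddCommGroup E] [InnerProductSpace ℝ E] [FiniteDimensional ℝ E]
    [MeasurableSpace E] [BorelSpace E] [Nontrivial E] (F : E → ℝ) (φ : ℝ → ℝ) (R : ℝ) (hR : 0 < R)
    (hφ : ∀ r, R < r → φ r = 0) (hi : Integrable (fun y : E => φ ‖y‖ * F y)) :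
    ∫ y : E, φ ‖y‖ * F y = ∫ r in (0:ℝ)..R, φ r * (r ^ (Module.finrank ℝ E - 1) *
      ∫ u : Metric.sphere (0:E) 1, F (r • (u:E)) ∂((volume : Measure E).toSphere)) := by
  rw [zo_polar _ hi, intervalIntegral.integral_of_le hR.le]
  have : Set.Ioc 0 R ⊆ Set.Ioi (0:ℝ) := fun r hr => hr.1
  rw [← setIntegral_eq_of_subset_of_forall_sdiff_eq_zero measurableSet_Ioi this]
  · refine setIntegral_congr_fun measurableSet_Ioi fun r hr => ?_
    have hr : 0 < r := hr
    have hn : ∀ u : Metric.sphere (0:E) 1, ‖r • (u:E)‖ = r := fun u => by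
      rw [norm_smul, Real.norm_of_nonneg hr.le]; simp
    simp only [hn]
    rw [integral_const_mul]; ring
  · intro r hr
    have : R < r := by
      by_contra hc
      exact hr.2 ⟨hr.1, not_lt.1 hc⟩
    simp [hφ r this]

lemma zo_sphere_cont {E : Type*} [NormedAddCommGroup E] [InnerProductSpace ℝ E]
    [FiniteDimensional ℝ E]
    [MeasurableSpace E] [BorelSpace E] (F : E → ℝ) (hF : Continuous F) :
    Continuous fun r : ℝ =>
      ∫ u : Metric.sphere (0:E) 1, F (r • (u:E)) ∂((volume : Measure E).toSphere) := by
  have := continuous_parametric_integral_of_continuous (μ := (volume : Measure E).toSphere)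
    (f := fun (r:ℝ) (u : Metric.sphere (0:E) 1) => F (r • (u:E)))
    (by simp only [Function.uncurry_def]; fun_prop) (isCompact_univ)
  simpa using this

lemma zo_ball {E : Type*} [NormedAddCommGroup E] [InnerProductSpace ℝ E] [FiniteDimensional ℝ E]
    [MeasurableSpace E] [BorelSpace E] [Nontrivial E] (h : E → ℝ) (h' : E → E →L[ℝ] ℝ)
    (hh : ∀ y, HasFDerivAt h (h' y) y) (hc : Continuous h') (e : E) (R : ℝ) (hR : 0 < R) :
    R * ∫ y in Metric.closedBall (0:E) R, h' y e = R ^ (Module.finrank ℝ E - 1) *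
      ∫ u : Metric.sphere (0:E) 1, h (R • (u:E)) * ⟪R • (u:E), e⟫
        ∂((volume : Measure E).toSphere) := by
  have hcont : Continuous h := continuous_iff_continuousAt.2 fun y => (hh y).continuousAt
  have cd : Continuous fun y => h' y e := hc.clm_apply continuous_const
  have ch : Continuous fun y => h y * ⟪y, e⟫ := by fun_prop
  have hz : ∀ R : ℝ, 0 < R → ∀ r, R < r → max (R^2 - r^2) 0 = 0 := by
    intro R hR r hr
    apply max_eq_right
    have := pow_le_pow_left₀ hR.le hr.le 2
    linarith
  have hint : ∀ R : ℝ, 0 < R → ∀ F : E → ℝ, Continuous F →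
      (∀ y, max (R^2 - ‖y‖^2) 0 = 0 → F y = 0) → Integrable F := by
    intro R hR F hF h0
    refine hF.integrable_of_hasCompactSupport
      (HasCompactSupport.intro (isCompact_closedBall (0:E) R) fun y hy => h0 y (hz R hR _ ?_))
    simpa using hy
  have e1 : ∫ y in Metric.closedBall (0:E) R, h' y e
      = ∫ y, (Set.Iic R).indicator (fun _ => (1:ℝ)) ‖y‖ * h' y e := by
    rw [← integral_indicator measurableSet_closedBall]
    congr 1; ext y
    by_cases hy : ‖y‖ ≤ R <;> simp [Set.indicator, hy]
  have i1 : Integrable fun y => (Set.Iic R).indicator (fun _ => (1:ℝ)) ‖y‖ * h' y e := by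
    have : Integrable ((Metric.closedBall (0:E) R).indicator fun y => h' y e) := by
      rw [integrable_indicator_iff measurableSet_closedBall]
      exact cd.continuousOn.integrableOn_compact (isCompact_closedBall _ _)
    convert this using 1
    ext y
    by_cases hy : ‖y‖ ≤ R <;> simp [Set.indicator, hy]
  rw [e1, zo_radial (fun y => h' y e) _ R hR (fun r hr => by simp [hr]) i1]
  have e2 : ∀ G : ℝ → ℝ, ∫ r in (0:ℝ)..R, (Set.Iic R).indicator (fun _ => (1:ℝ)) r * G r =
      ∫ r in (0:ℝ)..R, G r := by
    intro G
    refine intervalIntegral.integral_congr fun r hr => ?_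
    rw [Set.uIcc_of_le hR.le] at hr
    simp [hr.2]
  rw [e2]
  refine zo_calc _ (fun r => r ^ (Module.finrank ℝ E - 1) *
      ∫ u : Metric.sphere (0:E) 1, h (r • (u:E)) * ⟪r • (u:E), e⟫
        ∂((volume : Measure E).toSphere)) ?_ ?_ ?_ R hR
  · exact (continuous_pow _).mul (zo_sphere_cont _ cd)
  · exact (continuous_pow _).mul (zo_sphere_cont _ ch)
  · intro R hR
    have key := zo_ibp h h' hh hc e R
    rw [zo_radial (fun y => h' y e) (fun r => (max (R^2 - r^2) 0)^2) R hR
      (fun r hr => by simp [hz R hR r hr])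
      (hint R hR _ (by fun_prop) (fun y hy => by simp [hy])),
      zo_radial (fun y => h y * ⟪y, e⟫) (fun r => (max (R^2 - r^2) 0)) R hR
      (fun r hr => by simp [hz R hR r hr])
      (hint R hR _ (by fun_prop) (fun y hy => by simp [hy]))] at key
    have hm : ∀ r ∈ Set.uIcc 0 R, max (R^2 - r^2) 0 = R^2 - r^2 := by
      intro r hr
      rw [Set.uIcc_of_le hR.le] at hr
      apply max_eq_left
      have := pow_le_pow_left₀ hr.1 hr.2 2
      linarith
    convert key using 1
    · refine intervalIntegral.integral_congr fun r hr => ?_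
      simp only [hm r hr]
    · congr 1
      refine intervalIntegral.integral_congr fun r hr => ?_
      simp only [hm r hr]

lemma zo_avg {E : Type*} [NormedAddCommGroup E] [InnerProductSpace ℝ E] [FiniteDimensional ℝ E]
    [MeasurableSpace E] [BorelSpace E] [Nontrivial E] (h : E → ℝ) (h' : E → E →L[ℝ] ℝ)
    (hh : ∀ y, HasFDerivAt h (h' y) y) (hc : Continuous h') (e : E) (R : ℝ) (hR : 0 < R)
    (hRd : R^2 = Module.finrank ℝ E)
    (μ : Measure E) [IsProbabilityMeasure μ] (hμ : ∀ᵐ u ∂μ, ‖u‖ = R)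
    (hμi : ∀ T : E ≃ₗᵢ[ℝ] E, Measure.map T μ = μ) :
    ((volume (Metric.closedBall (0:E) R)).toReal)⁻¹ * ∫ y in Metric.closedBall (0:E) R, h' y e =
      ∫ u, h u * ⟪u, e⟫ ∂μ := by
  have hcont : Continuous h := continuous_iff_continuousAt.2 fun y => (hh y).continuousAt
  have hb := zo_ball h h' hh hc e R hR
  set ν := Measure.map (fun u : Metric.sphere (0:E) 1 => R • (u:E))
      ((volume : Measure E).toSphere) with hνdef
  have hm : Measurable (fun u : Metric.sphere (0:E) 1 => R • (u:E)) := by fun_prop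
  have hν : ∀ᵐ u ∂ν, ‖u‖ = R := by
    rw [hνdef, ae_map_iff hm.aemeasurable (measurableSet_eq_fun (by fun_prop) (by fun_prop))]
    refine .of_forall fun u => ?_
    rw [norm_smul, Real.norm_of_nonneg hR.le]; simp
  have : IsFiniteMeasure ν := by rw [hνdef]; infer_instance
  have hu := zo_unique μ ν R hR hμ hν hμi (fun T => zo_toSphere_inv R T)
  have hνu : ν Set.univ = Module.finrank ℝ E * volume (Metric.ball (0:E) 1) := by
    rw [hνdef, Measure.map_apply hm .univ, Set.preimage_univ, Measure.toSphere_apply_univ]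
  have i1 : ∫ u : Metric.sphere (0:E) 1, h (R • (u:E)) * ⟪R • (u:E), e⟫
        ∂((volume : Measure E).toSphere) = ∫ u, h u * ⟪u, e⟫ ∂ν := by
    rw [hνdef, integral_map hm.aemeasurable (by
      apply Continuous.aestronglyMeasurable; fun_prop)]
  rw [i1, hu, integral_smul_measure, hνu, ENNReal.toReal_mul] at hb
  have hvol : (volume (Metric.closedBall (0:E) R)).toReal =
      R ^ (Module.finrank ℝ E) * (volume (Metric.ball (0:E) 1)).toReal := by
    rw [Measure.addHaar_closedBall _ _ hR.le, ENNReal.toReal_mul, ENNReal.toReal_ofReal (by positivity)]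
  have hv : 0 < (volume (Metric.ball (0:E) 1)).toReal :=
    ENNReal.toReal_pos (Metric.measure_ball_pos _ _ one_pos).ne' measure_ball_lt_top.ne
  have hd : 0 < Module.finrank ℝ E := Module.finrank_pos
  obtain ⟨n, hn⟩ : ∃ n, Module.finrank ℝ E = n + 1 := ⟨Module.finrank ℝ E - 1, by omega⟩
  rw [hvol]
  simp only [ENNReal.toReal_natCast, ← hRd, smul_eq_mul] at hb
  rw [hn] at hb ⊢
  simp only [Nat.add_sub_cancel] at hb
  rw [inv_mul_eq_iff_eq_mul₀ (by positivity)]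
  apply mul_left_cancel₀ hR.ne'
  rw [hb]; ring

lemma zo_deriv {E : Type*} [NormedAddCommGroup E] [InnerProductSpace ℝ E] [FiniteDimensional ℝ E]
    [MeasurableSpace E] [BorelSpace E] (f : E → ℝ) (f' : E → E →L[ℝ] ℝ)
    (hf : ∀ y, HasFDerivAt f (f' y) y) (hc : Continuous f') (lam R : ℝ) (x : E) :
    HasFDerivAt (fun x => ∫ v in Metric.closedBall (0:E) R, f (x + lam • v))
      (∫ v in Metric.closedBall (0:E) R, f' (x + lam • v)) x := by
  have hcont : Continuous f := continuous_iff_continuousAt.2 fun y => (hf y).continuousAt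
  have hK : IsCompact ((fun p : E × E => p.1 + lam • p.2) ''
      (Metric.closedBall x 1 ×ˢ Metric.closedBall (0:E) R)) :=
    ((isCompact_closedBall _ _).prod (isCompact_closedBall _ _)).image (by fun_prop)
  obtain ⟨C, hC⟩ := hK.exists_bound_of_continuousOn hc.continuousOn
  refine hasFDerivAt_integral_of_dominated_of_fderiv_le (s := Metric.closedBall x 1)
    (bound := fun _ => C) (F' := fun x v => f' (x + lam • v))
    (Metric.closedBall_mem_nhds x one_pos) ?_ ?_ ?_ ?_ ?_ ?_
  · exact .of_forall fun y => Continuous.aestronglyMeasurable (by fun_prop)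
  · exact (Continuous.continuousOn (by fun_prop)).integrableOn_compact (isCompact_closedBall _ _)
  · exact Continuous.aestronglyMeasurable (by fun_prop)
  · filter_upwards [ae_restrict_mem measurableSet_closedBall] with v hv y hy
    exact hC _ ⟨(y, v), ⟨hy, hv⟩, rfl⟩
  · exact continuousOn_const.integrableOn_compact (isCompact_closedBall _ _)
  · refine .of_forall fun v y _ => ?_
    have h1 : HasFDerivAt (fun y : E => y + lam • v) (ContinuousLinearMap.id ℝ E) y :=
      (hasFDerivAt_id y).add_const _
    exact ((hf (y + lam • v)).comp y h1).congr_fderiv (by ext z; simp)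

/-- For `f : ℝ^d → ℝ` (L-smooth), `λ > 0`, `u` uniform on the sphere of radius
`√d` (characterized as the rotation-invariant probability measure on that sphere), the
two-point estimator `g(x) = ((f(x+λu) - f(x-λu))/(2λ)) • u` satisfies:
`f_λ` is differentiable and `E_u[g(x)] = ∇ f_λ(x)`, where
`f_λ(x) = E_v[f(x + λ v)]` with `v` uniform on the ball of radius `√d`. -/
theorem stmt0 {d : ℕ} (f : EuclideanSpace ℝ (Fin d) → ℝ) (L lam : ℝ)
    (hlam : 0 < lam)
    (hdiff : ∀ x, DifferentiableAt ℝ f x)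
    (hsmooth : ∀ x y, ‖gradient f x - gradient f y‖ ≤ L * ‖x - y‖)
    (μ : Measure (EuclideanSpace ℝ (Fin d))) [IsProbabilityMeasure μ]
    (hsupp : μ (Metric.sphere (0 : EuclideanSpace ℝ (Fin d)) (Real.sqrt d)) = 1)
    (hinv : ∀ T : EuclideanSpace ℝ (Fin d) ≃ₗᵢ[ℝ] EuclideanSpace ℝ (Fin d),
      Measure.map (⇑T) μ = μ)
    (flam : EuclideanSpace ℝ (Fin d) → ℝ)
    (hflam : ∀ x, flam x = ∫ v, f (x + lam • v) ∂(ballUniform d))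
    (x : EuclideanSpace ℝ (Fin d)) :
    DifferentiableAt ℝ flam x ∧
      (∫ u, ((f (x + lam • u) - f (x - lam • u)) / (2 * lam)) • u ∂μ)
        = gradient flam x := by
  rcases Nat.eq_zero_or_pos d with hd | hd
  · subst hd
    exact ⟨(hasFDerivAt_of_subsingleton flam x).differentiableAt, Subsingleton.elim _ _⟩
  have : Nonempty (Fin d) := ⟨⟨0, hd⟩⟩
  have : Nontrivial (EuclideanSpace ℝ (Fin d)) := inferInstance
  set R := Real.sqrt d with hRdef
  have hR : 0 < R := Real.sqrt_pos.2 (by exact_mod_cast hd)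
  have hR2 : R^2 = Module.finrank ℝ (EuclideanSpace ℝ (Fin d)) := by
    rw [hRdef, Real.sq_sqrt (by positivity)]; simp
  have hgc : Continuous (gradient f) := by
    refine (LipschitzWith.of_dist_le_mul (K := L.toNNReal) fun a b => ?_).continuous
    rw [dist_eq_norm, dist_eq_norm]
    refine (hsmooth a b).trans ?_
    gcongr
    exact Real.le_coe_toNNReal L
  have hf'c : Continuous (fderiv ℝ f) := by
    have : fderiv ℝ f = fun y => InnerProductSpace.toDual ℝ _ (gradient f y) := by
      ext1 y; simp [gradient]
    rw [this]
    exact (InnerProductSpace.toDual ℝ _).continuous.comp hgc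
  have hfc : Continuous f := continuous_iff_continuousAt.2 fun y => (hdiff y).continuousAt
  have hμ : ∀ᵐ u ∂μ, ‖u‖ = R := by
    have : ∀ᵐ u ∂μ, u ∈ Metric.sphere (0 : EuclideanSpace ℝ (Fin d)) R :=
      (mem_ae_iff_prob_eq_one Metric.isClosed_sphere.measurableSet).2 hsupp
    simpa using this
  set V := ((volume (Metric.closedBall (0 : EuclideanSpace ℝ (Fin d)) R)).toReal)⁻¹ with hV
  have hD : HasFDerivAt flam (V • ∫ v in Metric.closedBall (0 : EuclideanSpace ℝ (Fin d)) R,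
      fderiv ℝ f (x + lam • v)) x := by
    have : flam = fun x => V • ∫ v in Metric.closedBall (0 : EuclideanSpace ℝ (Fin d)) R,
        f (x + lam • v) := by
      ext y
      rw [hflam, ballUniform, integral_smul_measure, ENNReal.toReal_inv]
    rw [this]
    exact (zo_deriv f _ (fun y => (hdiff y).hasFDerivAt) hf'c lam R x).const_smul V
  refine ⟨hD.differentiableAt, ?_⟩
  -- integrability on the sphere
  have hint : ∀ {F : Type} [NormedAddCommGroup F] [SecondCountableTopology F]
      (G : EuclideanSpace ℝ (Fin d) → F),
      Continuous G → Integrable G μ := by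
    intro F _ _ G hG
    obtain ⟨C, hC⟩ := (isCompact_sphere (0 : EuclideanSpace ℝ (Fin d)) R).exists_bound_of_continuousOn
      hG.continuousOn
    refine Integrable.of_bound (C := C) hG.aestronglyMeasurable ?_
    filter_upwards [hμ] with u hu using hC u (by simpa using hu)
  refine ext_inner_right ℝ fun e => ?_
  rw [gradient, InnerProductSpace.toDual_symm_apply, hD.fderiv, real_inner_comm,
    ← integral_inner (hint _ (by fun_prop))]
  have hfi : Integrable (fun v => fderiv ℝ f (x + lam • v))
      (volume.restrict (Metric.closedBall (0 : EuclideanSpace ℝ (Fin d)) R)) :=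
    (Continuous.continuousOn (by fun_prop)).integrableOn_compact (isCompact_closedBall _ _)
  rw [ContinuousLinearMap.smul_apply, ContinuousLinearMap.integral_apply hfi]
  have key := zo_avg (fun y => f (x + lam • y)) (fun y => lam • fderiv ℝ f (x + lam • y))
    (fun y => by
      have h1 : HasFDerivAt (fun y : EuclideanSpace ℝ (Fin d) => x + lam • y)
          (lam • ContinuousLinearMap.id ℝ _) y := ((hasFDerivAt_id y).const_smul lam).const_add x
      exact ((hdiff (x + lam • y)).hasFDerivAt.comp y h1).congr_fderiv (by ext z; simp))
    (by fun_prop) e R hR hR2 μ hμ hinv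
  simp only [ContinuousLinearMap.smul_apply, smul_eq_mul, integral_const_mul] at key
  have hneg : ∫ u, f (x - lam • u) * ⟪u, e⟫ ∂μ = - ∫ u, f (x + lam • u) * ⟪u, e⟫ ∂μ := by
    conv_lhs => rw [← hinv (LinearIsometryEquiv.neg ℝ)]
    rw [integral_map (LinearIsometryEquiv.continuous _).measurable.aemeasurable
      (Continuous.aestronglyMeasurable (by fun_prop)), ← integral_neg]
    congr 1; ext u; simp
  have hsplit : ∫ u, ⟪e, ((f (x + lam • u) - f (x - lam • u)) / (2 * lam)) • u⟫ ∂μ =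
      (2 * lam)⁻¹ * ((∫ u, f (x + lam • u) * ⟪u, e⟫ ∂μ) - ∫ u, f (x - lam • u) * ⟪u, e⟫ ∂μ) := by
    rw [← integral_sub (hint _ (by fun_prop)) (hint _ (by fun_prop)), ← integral_const_mul]
    congr 1; ext u
    rw [inner_smul_right, real_inner_comm]
    field_simp
  rw [hsplit, hneg, ← key, smul_eq_mul]
  field_simp
  ring
end

section
/- Let u be uniformly distributed on the Euclidean sphere of radius √d in ℝ^d and let a ∈ ℝ^d be a fixed nonzero vector. Then E[u] = 0 and for all C > 0, P(|⟨u, a⟩| ≥ C) ≤ 2√(2π)·exp(−C²/(8‖a‖²)). -/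
open MeasureTheory
open scoped RealInnerProductSpace

lemma aux_trans {d : ℕ} (μ : Measure (EuclideanSpace ℝ (Fin d)))
    (hinv : ∀ T : EuclideanSpace ℝ (Fin d) ≃ₗᵢ[ℝ] EuclideanSpace ℝ (Fin d),
      Measure.map (⇑T) μ = μ)
    (x y : EuclideanSpace ℝ (Fin d)) (h : ‖x‖ = ‖y‖) :
    ∫⁻ u, ENNReal.ofReal (Real.exp ⟪u, x⟫) ∂μ = ∫⁻ u, ENNReal.ofReal (Real.exp ⟪u, y⟫) ∂μ := by
  obtain ⟨T, hT⟩ : ∃ T : EuclideanSpace ℝ (Fin d) ≃ₗᵢ[ℝ] EuclideanSpace ℝ (Fin d), T x = y :=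
    ⟨(ℝ ∙ (x - y))ᗮ.reflection, Submodule.reflection_sub h⟩
  conv_rhs => rw [← hinv T]
  rw [lintegral_map (by fun_prop) T.continuous.measurable]
  simp only [← hT, LinearIsometryEquiv.inner_map_map]

lemma aux_sum {d : ℕ} (c : ℝ) (u : EuclideanSpace ℝ (Fin d)) :
    ∑ s ∈ Fintype.piFinset (fun _ : Fin d => (Finset.univ : Finset Bool)),
      Real.exp ⟪u, WithLp.toLp 2 (fun i => if s i then c else -c)⟫
      ≤ 2 ^ d * Real.exp (c ^ 2 * ‖u‖ ^ 2 / 2) := by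
  have h1 : ∀ s : Fin d → Bool,
      Real.exp ⟪u, WithLp.toLp 2 (fun i => if s i then c else -c)⟫
      = ∏ i, Real.exp ((if s i then c else -c) * u i) := by
    intro s
    rw [← Real.exp_sum]
    simp [PiLp.inner_apply]
  simp only [h1]
  rw [← Finset.prod_univ_sum (fun _ : Fin d => (Finset.univ : Finset Bool))
    (fun i b => Real.exp ((if b then c else -c) * u i))]
  calc _ ≤ ∏ i : Fin d, (2 * Real.exp ((c * u i) ^ 2 / 2)) := by
        apply Finset.prod_le_prod
        · intros; positivity
        · intro i _
          have := Real.cosh_le_exp_half_sq (c * u i)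
          rw [Real.cosh_eq] at this
          simp
          linarith
    _ = _ := by
        rw [Finset.prod_mul_distrib, ← Real.exp_sum, EuclideanSpace.norm_sq_eq]
        simp [mul_pow, Finset.mul_sum, Finset.sum_div]

lemma aux_mgf {d : ℕ} (μ : Measure (EuclideanSpace ℝ (Fin d))) [IsProbabilityMeasure μ]
    (hsupp : μ (Metric.sphere (0 : EuclideanSpace ℝ (Fin d)) (Real.sqrt d)) = 1)
    (hinv : ∀ T : EuclideanSpace ℝ (Fin d) ≃ₗᵢ[ℝ] EuclideanSpace ℝ (Fin d),
      Measure.map (⇑T) μ = μ) (hd : 0 < d)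
    (b : EuclideanSpace ℝ (Fin d)) :
    ∫⁻ u, ENNReal.ofReal (Real.exp ⟪u, b⟫) ∂μ ≤ ENNReal.ofReal (Real.exp (‖b‖ ^ 2 / 2)) := by
  have hd' : (0 : ℝ) < d := by exact_mod_cast hd
  set c : ℝ := ‖b‖ / Real.sqrt d with hc
  have hcd : c ^ 2 * d = ‖b‖ ^ 2 := by
    rw [hc, div_pow, Real.sq_sqrt hd'.le]; field_simp
  have hae : ∀ᵐ u ∂μ, u ∈ Metric.sphere (0 : EuclideanSpace ℝ (Fin d)) (Real.sqrt d) := by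
    exact (mem_ae_iff_prob_eq_one Metric.isClosed_sphere.measurableSet).2 hsupp
  have hs : ∀ s : Fin d → Bool, ‖b‖ = ‖(WithLp.toLp 2 (fun i => if s i then c else -c) :
      EuclideanSpace ℝ (Fin d))‖ := by
    intro s
    rw [← sq_eq_sq₀ (norm_nonneg _) (norm_nonneg _), ← hcd, EuclideanSpace.norm_sq_eq]
    have : ∀ i, ‖(if s i then c else -c)‖ ^ 2 = c ^ 2 := by
      intro i; split_ifs <;> simp
    simp [this, mul_comm]
  have key : (2 : ENNReal) ^ d * ∫⁻ u, ENNReal.ofReal (Real.exp ⟪u, b⟫) ∂μ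
      ≤ 2 ^ d * ENNReal.ofReal (Real.exp (‖b‖ ^ 2 / 2)) := by
    calc _ = ∑ s ∈ Fintype.piFinset (fun _ : Fin d => (Finset.univ : Finset Bool)),
          ∫⁻ u, ENNReal.ofReal (Real.exp ⟪u, WithLp.toLp 2 (fun i => if s i then c else -c)⟫) ∂μ := by
          rw [Finset.sum_congr rfl (fun s _ => (aux_trans μ hinv b _ (hs s)).symm)]
          simp
      _ = ∫⁻ u, ∑ s ∈ Fintype.piFinset (fun _ : Fin d => (Finset.univ : Finset Bool)),
          ENNReal.ofReal (Real.exp ⟪u, WithLp.toLp 2 (fun i => if s i then c else -c)⟫) ∂μ := by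
          rw [lintegral_finsetSum]
          intros; fun_prop
      _ ≤ ∫⁻ u, 2 ^ d * ENNReal.ofReal (Real.exp (‖b‖ ^ 2 / 2)) ∂μ := by
          apply lintegral_mono_ae
          filter_upwards [hae] with u hu
          have hu' : ‖u‖ ^ 2 = d := by
            rw [mem_sphere_zero_iff_norm.1 hu, Real.sq_sqrt hd'.le]
          have := aux_sum c u
          rw [hu', hcd] at this
          rw [← ENNReal.ofReal_sum_of_nonneg (fun _ _ => (Real.exp_pos _).le)]
          refine (ENNReal.ofReal_le_ofReal this).trans ?_
          rw [ENNReal.ofReal_mul (by positivity), ENNReal.ofReal_pow (by positivity)]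
          simp
      _ = _ := by simp
  exact (ENNReal.mul_le_mul_iff_right (by simp) (by simp)).1 key

lemma aux_tail {d : ℕ} (μ : Measure (EuclideanSpace ℝ (Fin d))) [IsProbabilityMeasure μ]
    (hsupp : μ (Metric.sphere (0 : EuclideanSpace ℝ (Fin d)) (Real.sqrt d)) = 1)
    (hinv : ∀ T : EuclideanSpace ℝ (Fin d) ≃ₗᵢ[ℝ] EuclideanSpace ℝ (Fin d),
      Measure.map (⇑T) μ = μ) (hd : 0 < d)
    (a : EuclideanSpace ℝ (Fin d)) (ha : a ≠ 0) (C : ℝ) (hC : 0 < C) :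
    μ {u | C ≤ ⟪u, a⟫} ≤ ENNReal.ofReal (Real.exp (-C ^ 2 / (2 * ‖a‖ ^ 2))) := by
  have hn : 0 < ‖a‖ := norm_pos_iff.2 ha
  set t : ℝ := C / ‖a‖ ^ 2 with ht
  have htp : 0 < t := by positivity
  have h1 := aux_mgf μ hsupp hinv hd (t • a)
  have h2 : ENNReal.ofReal (Real.exp (t * C)) * μ {u | C ≤ ⟪u, a⟫} ≤
      ∫⁻ u, ENNReal.ofReal (Real.exp ⟪u, t • a⟫) ∂μ := by
    refine le_trans ?_ (mul_meas_ge_le_lintegral (by fun_prop) (ENNReal.ofReal (Real.exp (t * C))))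
    gcongr
    rename_i u
    intro hu
    apply ENNReal.ofReal_le_ofReal
    rw [inner_smul_right]
    have : C ≤ ⟪u, a⟫ := hu
    gcongr
  have h3 := h2.trans h1
  have e : Real.exp (‖t • a‖ ^ 2 / 2) =
      Real.exp (t * C) * Real.exp (-C ^ 2 / (2 * ‖a‖ ^ 2)) := by
    rw [← Real.exp_add, norm_smul, Real.norm_of_nonneg htp.le, ht]
    congr 1
    field_simp
    ring
  rw [e, ENNReal.ofReal_mul (Real.exp_pos _).le] at h3
  exact (ENNReal.mul_le_mul_iff_right (by simp [Real.exp_pos]) (by simp)).1 h3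


/-- Let `u` be uniform on the Euclidean sphere of radius `√d` in `ℝ^d`
(characterized as the rotation-invariant probability measure on that sphere) and `a ≠ 0`
a fixed vector. Then `E[u] = 0` and for all `C > 0`,
`P(|⟨u, a⟩| ≥ C) ≤ 2√(2π)·exp(−C²/(8‖a‖²))`. -/
theorem stmt5 {d : ℕ} (μ : Measure (EuclideanSpace ℝ (Fin d))) [IsProbabilityMeasure μ]
    (hsupp : μ (Metric.sphere (0 : EuclideanSpace ℝ (Fin d)) (Real.sqrt d)) = 1)
    (hinv : ∀ T : EuclideanSpace ℝ (Fin d) ≃ₗᵢ[ℝ] EuclideanSpace ℝ (Fin d),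
      Measure.map (⇑T) μ = μ)
    (a : EuclideanSpace ℝ (Fin d)) (ha : a ≠ 0) :
    (∫ u, u ∂μ = 0) ∧
    ∀ C : ℝ, 0 < C →
      μ {u | C ≤ |⟪u, a⟫|} ≤
        ENNReal.ofReal (2 * Real.sqrt (2 * Real.pi) * Real.exp (-C ^ 2 / (8 * ‖a‖ ^ 2))) := by
  have hd : 0 < d := by
    rcases Nat.eq_zero_or_pos d with h | h
    · subst h; exact absurd (Subsingleton.elim a 0) ha
    · exact h
  refine ⟨?_, fun C hC => ?_⟩
  · have h : ∫ u, u ∂μ = - ∫ u, u ∂μ := by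
      conv_lhs => rw [← hinv (LinearIsometryEquiv.neg ℝ)]
      rw [integral_map (LinearIsometryEquiv.neg ℝ).continuous.aemeasurable (by fun_prop)]
      simp only [LinearIsometryEquiv.coe_neg]
      exact integral_neg (fun u : EuclideanSpace ℝ (Fin d) => u)
    have h2 : (2 : ℝ) • ∫ u, u ∂μ = 0 := by
      rw [two_smul]; exact eq_neg_iff_add_eq_zero.1 h
    exact (smul_eq_zero.1 h2).resolve_left two_ne_zero
  · have hn : 0 < ‖a‖ := norm_pos_iff.2 ha
    have h1 := aux_tail μ hsupp hinv hd a ha C hC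
    have h2 := aux_tail μ hsupp hinv hd (-a) (neg_ne_zero.2 ha) C hC
    rw [norm_neg] at h2
    have hsub : {u : EuclideanSpace ℝ (Fin d) | C ≤ |⟪u, a⟫|} ⊆
        {u | C ≤ ⟪u, a⟫} ∪ {u | C ≤ ⟪u, -a⟫} := by
      intro u hu
      have : C ≤ |⟪u, a⟫| := hu
      simpa [inner_neg_right, le_abs] using this
    refine ((measure_mono hsub).trans (measure_union_le _ _)).trans ((add_le_add h1 h2).trans ?_)
    rw [← ENNReal.ofReal_add (Real.exp_pos _).le (Real.exp_pos _).le, ← two_mul]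
    apply ENNReal.ofReal_le_ofReal
    have hs : 1 ≤ Real.sqrt (2 * Real.pi) := by
      rw [Real.one_le_sqrt]; linarith [Real.pi_gt_three]
    have he : Real.exp (-C ^ 2 / (2 * ‖a‖ ^ 2)) ≤ Real.exp (-C ^ 2 / (8 * ‖a‖ ^ 2)) := by
      apply Real.exp_le_exp.2
      rw [neg_div, neg_div, neg_le_neg_iff]
      gcongr
      norm_num
    have := Real.exp_pos (-C ^ 2 / (8 * ‖a‖ ^ 2))
    nlinarith
end

section
/- Let f : ℝ^d → ℝ be ℓ-Lipschitz and L-smooth, u uniform on the sphere of radius √d, and λ > 0. For any C₀ > 0, if the clipping threshold C satisfies C ≥ C₀ + Lλd/2, then the probability that the zeroth-order finite difference exceeds the threshold is bounded: P(|f(x + λu) − f(x − λu)|/(2λ) ≥ C) ≤ 2√(2π)·exp(−C₀²/(8ℓ²)). -/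
open MeasureTheory
open scoped RealInnerProductSpace

lemma mgf_rot {d : ℕ} (μ : Measure (EuclideanSpace ℝ (Fin d)))
    (hinv : ∀ T : EuclideanSpace ℝ (Fin d) ≃ₗᵢ[ℝ] EuclideanSpace ℝ (Fin d),
      Measure.map (⇑T) μ = μ) (a b : EuclideanSpace ℝ (Fin d)) (h : ‖a‖ = ‖b‖) :
    ∫⁻ u, ENNReal.ofReal (Real.exp ⟪u, a⟫) ∂μ = ∫⁻ u, ENNReal.ofReal (Real.exp ⟪u, b⟫) ∂μ := by
  obtain ⟨T, hT⟩ : ∃ T : EuclideanSpace ℝ (Fin d) ≃ₗᵢ[ℝ] EuclideanSpace ℝ (Fin d), T a = b :=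
    ⟨_, Submodule.reflection_sub h⟩
  conv_rhs => rw [← hinv T]
  rw [lintegral_map (by fun_prop) T.continuous.measurable]
  simp [← hT]

lemma sum_signs {d : ℕ} (w : Fin d → ℝ) :
    ∑ p : Fin d → Bool, Real.exp (∑ i, (if p i then w i else - w i)) ≤
      2 ^ d * Real.exp ((∑ i, w i ^ 2) / 2) := by
  have h1 : ∑ p : Fin d → Bool, Real.exp (∑ i, (if p i then w i else - w i))
      = ∏ i, ∑ b : Bool, Real.exp (if b then w i else - w i) := by
    rw [Fintype.prod_sum]
    simp [Real.exp_sum]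
  rw [h1, Finset.sum_div, Real.exp_sum]
  have : (2:ℝ) ^ d = ∏ i : Fin d, 2 := by simp
  rw [this, ← Finset.prod_mul_distrib]
  apply Finset.prod_le_prod
  · intros; positivity
  · intro i _
    have := Real.cosh_le_exp_half_sq (w i)
    rw [Real.cosh_eq] at this
    simp
    linarith

lemma mgf_bound {d : ℕ} (μ : Measure (EuclideanSpace ℝ (Fin d))) [IsProbabilityMeasure μ]
    (hsupp : ∀ᵐ u ∂μ, ‖u‖ = Real.sqrt d)
    (hinv : ∀ T : EuclideanSpace ℝ (Fin d) ≃ₗᵢ[ℝ] EuclideanSpace ℝ (Fin d),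
      Measure.map (⇑T) μ = μ) (a : EuclideanSpace ℝ (Fin d)) :
    ∫⁻ u, ENNReal.ofReal (Real.exp ⟪u, a⟫) ∂μ ≤ ENNReal.ofReal (Real.exp (‖a‖ ^ 2 / 2)) := by
  obtain ⟨t, ht0, ht⟩ : ∃ t : ℝ, 0 ≤ t ∧ t ^ 2 * d = ‖a‖ ^ 2 := by
    rcases Nat.eq_zero_or_pos d with rfl | hd
    · refine ⟨0, le_rfl, ?_⟩
      rw [Subsingleton.elim a 0]; simp
    · refine ⟨‖a‖ / Real.sqrt d, by positivity, ?_⟩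
      have : (0:ℝ) < d := by exact_mod_cast hd
      rw [div_pow, Real.sq_sqrt this.le]; field_simp
  let v : (Fin d → Bool) → EuclideanSpace ℝ (Fin d) := fun p =>
    WithLp.toLp 2 (fun i => if p i then t else -t)
  have hv : ∀ p, ‖a‖ = ‖v p‖ := by
    intro p
    rw [← sq_eq_sq₀ (norm_nonneg _) (norm_nonneg _), EuclideanSpace.norm_sq_eq (v p)]
    have : ∀ i, ‖v p i‖ ^ 2 = t ^ 2 := by
      intro i; simp only [v]; split_ifs <;> simp
    simp only [this]
    simp
    linarith
  have hin : ∀ u p, ⟪u, v p⟫ = ∑ i, (if p i then t * u i else - (t * u i)) := by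
    intro u p
    simp only [PiLp.inner_apply, v]
    refine Finset.sum_congr rfl fun i _ => ?_
    split_ifs <;> simp
  have key : (2:ENNReal) ^ d * ∫⁻ u, ENNReal.ofReal (Real.exp ⟪u, a⟫) ∂μ ≤
      2 ^ d * ENNReal.ofReal (Real.exp (‖a‖ ^ 2 / 2)) := by
    calc (2:ENNReal) ^ d * ∫⁻ u, ENNReal.ofReal (Real.exp ⟪u, a⟫) ∂μ
        = ∑ p : Fin d → Bool, ∫⁻ u, ENNReal.ofReal (Real.exp ⟪u, v p⟫) ∂μ := by
          simp only [← mgf_rot μ hinv a (v _) (hv _)]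
          simp
      _ = ∫⁻ u, ENNReal.ofReal (∑ p : Fin d → Bool, Real.exp ⟪u, v p⟫) ∂μ := by
          rw [← lintegral_finsetSum _ (by intros; fun_prop)]
          congr 1; ext u
          rw [ENNReal.ofReal_sum_of_nonneg (by intros; positivity)]
      _ ≤ ∫⁻ u, ENNReal.ofReal (2 ^ d * Real.exp (‖a‖ ^ 2 / 2)) ∂μ := by
          apply lintegral_mono_ae
          filter_upwards [hsupp] with u hu
          apply ENNReal.ofReal_le_ofReal
          simp only [hin]
          refine (sum_signs (fun i => t * u i)).trans (le_of_eq ?_)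
          congr 3
          have h2 : ‖u‖ ^ 2 = d := by rw [hu, Real.sq_sqrt (by positivity)]
          rw [EuclideanSpace.norm_sq_eq] at h2
          rw [← ht, ← h2, Finset.mul_sum]
          simp [mul_pow]
      _ = _ := by
          rw [lintegral_const, measure_univ, mul_one, ENNReal.ofReal_mul (by positivity),
            ENNReal.ofReal_pow (by norm_num)]
          simp
  exact (ENNReal.mul_le_mul_iff_right (by simp) (by simp)).1 key

lemma taylor {d : ℕ} (f : EuclideanSpace ℝ (Fin d) → ℝ) (L lam : ℝ)
    (hlam : 0 < lam)
    (hdiff : ∀ x, DifferentiableAt ℝ f x)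
    (hsmooth : ∀ x y, ‖gradient f x - gradient f y‖ ≤ L * ‖x - y‖)
    (x u : EuclideanSpace ℝ (Fin d)) :
    |f (x + lam • u) - f (x - lam • u) - 2 * lam * ⟪u, gradient f x⟫| ≤ L * lam ^ 2 * ‖u‖ ^ 2 := by
  have hd1 : ∀ (s t : ℝ), HasDerivAt (fun t : ℝ => f (x + (s * t) • u))
      (s * ⟪u, gradient f (x + (s * t) • u)⟫) t := by
    intro s t
    have h1 := (hdiff (x + (s * t) • u)).hasGradientAt.hasFDerivAt
    have h2 : HasDerivAt (fun t : ℝ => x + (s * t) • u) (s • u) t := by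
      have := (((hasDerivAt_id t).const_mul s).smul_const u).const_add x
      simpa using this
    have := h1.comp_hasDerivAt t h2
    refine this.congr_deriv ?_
    simp
  let g : ℝ → ℝ := fun t => f (x + ((1:ℝ) * t) • u) - f (x + ((-1:ℝ) * t) • u)
    - t * (2 * ⟪u, gradient f x⟫)
  let g' : ℝ → ℝ := fun t => 1 * ⟪u, gradient f (x + ((1:ℝ) * t) • u)⟫ -
    (-1) * ⟪u, gradient f (x + ((-1:ℝ) * t) • u)⟫ - 1 * (2 * ⟪u, gradient f x⟫)
  have hg : ∀ t, HasDerivAt g (g' t) t := fun t =>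
    ((hd1 1 t).sub (hd1 (-1) t)).sub ((hasDerivAt_id t).mul_const _)
  have hB : ∀ t, HasDerivAt (fun t : ℝ => L * t ^ 2 * ‖u‖ ^ 2) (2 * L * t * ‖u‖ ^ 2) t := by
    intro t
    have := ((hasDerivAt_pow 2 t).const_mul L).mul_const (‖u‖ ^ 2)
    refine this.congr_deriv ?_
    norm_num only [pow_one]; push_cast; ring
  have hbd : ∀ (s t : ℝ), |s| = 1 → 0 ≤ t →
      |⟪u, gradient f (x + (s * t) • u) - gradient f x⟫| ≤ L * t * ‖u‖ ^ 2 := by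
    intro s t hs ht
    refine (abs_real_inner_le_norm _ _).trans ?_
    have := hsmooth (x + (s * t) • u) x
    rw [add_sub_cancel_left, norm_smul, norm_mul, Real.norm_eq_abs, Real.norm_eq_abs, hs,
      abs_of_nonneg ht] at this
    nlinarith [mul_le_mul_of_nonneg_left this (norm_nonneg u)]
  have := image_norm_le_of_norm_deriv_right_le_deriv_boundary' (f := g) (f' := g')
    (a := 0) (b := lam) (B := fun t : ℝ => L * t ^ 2 * ‖u‖ ^ 2)
    (B' := fun t => 2 * L * t * ‖u‖ ^ 2)
    (fun t _ => (hg t).continuousAt.continuousWithinAt)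
    (fun t _ => (hg t).hasDerivWithinAt) (by simp [g])
    (fun t _ => (hB t).continuousAt.continuousWithinAt)
    (fun t _ => (hB t).hasDerivWithinAt) (by
      intro t ht
      have h1 := hbd 1 t (by simp) ht.1
      have h2 := hbd (-1) t (by simp) ht.1
      rw [inner_sub_right] at h1 h2
      rw [abs_le] at h1 h2
      rw [Real.norm_eq_abs, abs_le]
      simp only [g']
      constructor <;> linarith [h1.1, h1.2, h2.1, h2.2]) (x := lam) ⟨hlam.le, le_rfl⟩
  simp only [g, Real.norm_eq_abs] at this
  convert this using 2
  simp [sub_eq_add_neg]; ring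

lemma tail_bound {d : ℕ} (μ : Measure (EuclideanSpace ℝ (Fin d))) [IsProbabilityMeasure μ]
    (hsupp : ∀ᵐ u ∂μ, ‖u‖ = Real.sqrt d)
    (hinv : ∀ T : EuclideanSpace ℝ (Fin d) ≃ₗᵢ[ℝ] EuclideanSpace ℝ (Fin d),
      Measure.map (⇑T) μ = μ) (a : EuclideanSpace ℝ (Fin d)) (l c : ℝ) (hl : 0 < l) (hc : 0 < c)
    (ha : ‖a‖ ≤ l) :
    μ {u | c ≤ ⟪u, a⟫} ≤ ENNReal.ofReal (Real.exp (-c ^ 2 / (2 * l ^ 2))) := by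
  set s := c / l ^ 2 with hs
  have hs0 : 0 < s := by positivity
  have h1 := mul_meas_ge_le_lintegral (μ := μ)
    (f := fun u => ENNReal.ofReal (Real.exp ⟪u, s • a⟫)) (by fun_prop)
    (ENNReal.ofReal (Real.exp (s * c)))
  have h2 := h1.trans (mgf_bound μ hsupp hinv (s • a))
  have h3 : μ {u | c ≤ ⟪u, a⟫} ≤ μ {u | ENNReal.ofReal (Real.exp (s * c)) ≤
      ENNReal.ofReal (Real.exp ⟪u, s • a⟫)} := by
    apply measure_mono
    intro u hu
    simp only [Set.mem_ofPred_eq] at hu ⊢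
    apply ENNReal.ofReal_le_ofReal
    rw [Real.exp_le_exp, inner_smul_right]
    exact mul_le_mul_of_nonneg_left hu hs0.le
  have h4 : ENNReal.ofReal (Real.exp (s * c)) * μ {u | c ≤ ⟪u, a⟫} ≤
      ENNReal.ofReal (Real.exp (s * c)) * ENNReal.ofReal (Real.exp (-c ^ 2 / (2 * l ^ 2))) := by
    refine ((mul_le_mul_right h3 _).trans h2).trans ?_
    rw [← ENNReal.ofReal_mul (by positivity), ← Real.exp_add]
    apply ENNReal.ofReal_le_ofReal
    rw [Real.exp_le_exp, norm_smul, Real.norm_of_nonneg hs0.le]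
    have h5 : (s * ‖a‖) ^ 2 ≤ (s * l) ^ 2 := by gcongr
    have h6 : s * c + -c ^ 2 / (2 * l ^ 2) = (s * l) ^ 2 / 2 := by
      rw [hs]; field_simp; ring
    linarith
  exact (ENNReal.mul_le_mul_iff_right (by simp [Real.exp_pos]) (by simp)).1 h4

/-- Let `f : ℝ^d → ℝ` be ℓ-Lipschitz and L-smooth, `u` uniform on the sphere of
radius `√d` (characterized as the rotation-invariant probability measure on that sphere) and
`λ > 0`. For any `C₀ > 0`, if the clipping threshold `C` satisfies `C ≥ C₀ + Lλd/2`, then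
`P(|f(x+λu) − f(x−λu)|/(2λ) ≥ C) ≤ 2√(2π)·exp(−C₀²/(8ℓ²))`. -/
theorem stmt7 {d : ℕ} (f : EuclideanSpace ℝ (Fin d) → ℝ) (ℓ L lam : ℝ)
    (hlam : 0 < lam)
    (hlip : ∀ x y, |f x - f y| ≤ ℓ * ‖x - y‖)
    (hdiff : ∀ x, DifferentiableAt ℝ f x)
    (hsmooth : ∀ x y, ‖gradient f x - gradient f y‖ ≤ L * ‖x - y‖)
    (μ : Measure (EuclideanSpace ℝ (Fin d))) [IsProbabilityMeasure μ]
    (hsupp : μ (Metric.sphere (0 : EuclideanSpace ℝ (Fin d)) (Real.sqrt d)) = 1)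
    (hinv : ∀ T : EuclideanSpace ℝ (Fin d) ≃ₗᵢ[ℝ] EuclideanSpace ℝ (Fin d),
      Measure.map (⇑T) μ = μ)
    (x : EuclideanSpace ℝ (Fin d)) (C C₀ : ℝ) (hC₀ : 0 < C₀)
    (hC : C ≥ C₀ + L * lam * (d : ℝ) / 2) :
    μ {u | C ≤ |f (x + lam • u) - f (x - lam • u)| / (2 * lam)} ≤
      ENNReal.ofReal (2 * Real.sqrt (2 * Real.pi) * Real.exp (-C₀ ^ 2 / (8 * ℓ ^ 2))) := by
  have hsupp' : ∀ᵐ u ∂μ, ‖u‖ = Real.sqrt d := by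
    have := (prob_compl_eq_zero_iff Metric.isClosed_sphere.measurableSet).2 hsupp
    have h2 : ∀ᵐ u ∂μ, u ∈ Metric.sphere (0 : EuclideanSpace ℝ (Fin d)) (Real.sqrt d) := this
    filter_upwards [h2] with u hu
    simpa using hu
  have hpi : 1 ≤ Real.sqrt (2 * Real.pi) := by
    rw [Real.one_le_sqrt]; linarith [Real.pi_gt_three]
  rcases eq_or_ne ℓ 0 with h0 | h0
  · refine prob_le_one.trans ?_
    rw [ENNReal.one_le_ofReal, h0]
    norm_num [-Real.sqrt_mul, -Nat.ofNat_nonneg, -Real.sqrt_mul']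
    linarith
  have hl : 0 < |ℓ| := abs_pos.2 h0
  set a := gradient f x with ha
  have hgrad : ‖a‖ ≤ |ℓ| := by
    have h1 := (hdiff x).hasGradientAt.hasFDerivAt.le_of_lip' hl.le
      (Filter.Eventually.of_forall fun y => by
        rw [Real.norm_eq_abs]
        exact (hlip y x).trans (mul_le_mul_of_nonneg_right (le_abs_self ℓ) (norm_nonneg _)))
    rwa [LinearIsometryEquiv.norm_map] at h1
  have t1 := tail_bound μ hsupp' hinv a |ℓ| C₀ hl hC₀ hgrad
  have t2 := tail_bound μ hsupp' hinv (-a) |ℓ| C₀ hl hC₀ (by simpa using hgrad)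
  have hsub : μ {u | C ≤ |f (x + lam • u) - f (x - lam • u)| / (2 * lam)} ≤
      μ ({u | C₀ ≤ ⟪u, a⟫} ∪ {u | C₀ ≤ ⟪u, -a⟫}) := by
    apply measure_mono_ae
    filter_upwards [hsupp'] with u hu hmem
    change C ≤ |f (x + lam • u) - f (x - lam • u)| / (2 * lam) at hmem
    change C₀ ≤ ⟪u, a⟫ ∨ C₀ ≤ ⟪u, -a⟫
    have h1 := taylor f L lam hlam hdiff hsmooth x u
    rw [hu, Real.sq_sqrt (by positivity), ← ha] at h1
    rw [inner_neg_right, ← le_abs]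
    rw [le_div_iff₀ (by positivity)] at hmem
    have h2 := abs_sub_abs_le_abs_sub (f (x + lam • u) - f (x - lam • u)) (2 * lam * ⟪u, a⟫)
    rw [abs_mul, abs_of_pos (by positivity : 0 < 2 * lam)] at h2
    have h3 := mul_le_mul_of_nonneg_right hC (by positivity : 0 ≤ 2 * lam)
    have h4 : C₀ * (2 * lam) ≤ |⟪u, a⟫| * (2 * lam) := by nlinarith
    exact le_of_mul_le_mul_right h4 (by positivity)
  refine (hsub.trans (measure_union_le _ _)).trans ((add_le_add t1 t2).trans ?_)
  rw [← ENNReal.ofReal_add (by positivity) (by positivity), sq_abs]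
  apply ENNReal.ofReal_le_ofReal
  have hl2 : 0 < ℓ ^ 2 := by positivity
  have h1 : Real.exp (-C₀ ^ 2 / (2 * ℓ ^ 2)) ≤ Real.exp (-C₀ ^ 2 / (8 * ℓ ^ 2)) := by
    rw [Real.exp_le_exp, neg_div, neg_div, neg_le_neg_iff]
    gcongr
    norm_num
  nlinarith [Real.exp_pos (-C₀ ^ 2 / (8 * ℓ ^ 2))]
end
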